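/- There exist a convex continuously differentiable function f : ℝ² → ℝ with unique minimizer at the origin, a point X₀ ≠ 0, and a function X : [0,∞) → ℝ², continuous on [0,∞) and twice continuously differentiable on (0,∞), satisfying Ẍ(t) + (3/t)·Ẋ(t) + ∇f(X(t)) = 0 for all t > 0, X(0) = X₀, and Ẋ(0) = 0 (in the sense that Ẋ(t) → 0 as t → 0⁺), such that the path length ∫₀^∞ ‖Ẋ(t)‖ dt is infinite. -/

import Mathlib

open Filter Topology MeasureTheory

noncomputable def nfV (φ u : ℝ → ℝ) (s : ℝ) : ℝ := -(s * ∫ r in (0:ℝ)..1, r^3 * φ (u (s*r)))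
noncomputable def nfG (φ : ℝ → ℝ) (x0 : ℝ) (u : ℝ → ℝ) (t : ℝ) : ℝ := x0 + ∫ s in (0:ℝ)..t, nfV φ u s
noncomputable def nfU (φ : ℝ → ℝ) (x0 h : ℝ) : ℕ → ℝ → ℝ
  | 0 => fun _ => x0
  | k+1 => fun r => nfG φ x0 (nfU φ x0 h k) (max (r-h) 0)

lemma nfV_cont {φ u : ℝ → ℝ} (hφ : Continuous φ) (hu : Continuous u) : Continuous (nfV φ u) := by
  unfold nfV
  refine (continuous_id.mul ?_).neg
  apply intervalIntegral.continuous_parametric_intervalIntegral_of_continuous'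
  fun_prop

lemma nfV_bound {φ : ℝ → ℝ} (u : ℝ → ℝ) (hb : ∀ y, |φ y| ≤ 2) (s : ℝ) : |nfV φ u s| ≤ 2 * |s| := by
  unfold nfV
  rw [abs_neg, abs_mul, mul_comm 2]
  refine mul_le_mul_of_nonneg_left ?_ (abs_nonneg _)
  have := intervalIntegral.norm_integral_le_of_norm_le_const (a := (0:ℝ)) (b := 1) (C := 2)
    (f := fun r => r^3 * φ (u (s*r))) ?_
  · simpa using this
  · intro r hr
    rw [Set.uIoc_of_le zero_le_one] at hr
    rw [Real.norm_eq_abs, abs_mul, abs_of_nonneg (pow_nonneg hr.1.le 3)]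
    have h1 : r^3 ≤ 1 := pow_le_one₀ hr.1.le hr.2
    nlinarith [hb (u (s*r)), abs_nonneg (φ (u (s*r))), pow_nonneg hr.1.le 3]

lemma nfV_deriv {φ u : ℝ → ℝ} (hφ : Continuous φ) (hu : Continuous u) {t : ℝ} (ht : 0 < t) :
    HasDerivAt (nfV φ u) (-(3/t) * nfV φ u t - φ (u t)) t := by
  have key : ∀ s, 0 < s → nfV φ u s = -((s^3)⁻¹ * ∫ r in (0:ℝ)..s, r^3 * φ (u r)) := by
    intro s hs
    unfold nfV
    have h := intervalIntegral.integral_comp_mul_left (a := 0) (b := 1)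
      (fun r => r^3 * φ (u r)) hs.ne'
    simp only [mul_zero, mul_one, smul_eq_mul] at h
    have h2 : (∫ r in (0:ℝ)..1, (s*r)^3 * φ (u (s*r))) = s^3 * ∫ r in (0:ℝ)..1, r^3 * φ (u (s*r)) := by
      rw [← intervalIntegral.integral_const_mul]
      congr 1; ext r; ring
    rw [h2] at h
    have : (∫ r in (0:ℝ)..s, r^3 * φ (u r)) = s * (s^3 * ∫ r in (0:ℝ)..1, r^3 * φ (u (s*r))) := by
      rw [h]; field_simp
    rw [this]; field_simp
  have hI : HasDerivAt (fun s => ∫ r in (0:ℝ)..s, r^3 * φ (u r)) (t^3 * φ (u t)) t := by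
    have hc : Continuous (fun r => r^3 * φ (u r)) := by fun_prop
    exact intervalIntegral.integral_hasDerivAt_right (hc.intervalIntegrable _ _)
      (hc.stronglyMeasurableAtFilter _ _) hc.continuousAt
  have hp : HasDerivAt (fun s : ℝ => (s^3)⁻¹) (-(3*t^2)/(t^3)^2) t := by
    have := (hasDerivAt_pow 3 t).inv (by positivity)
    exact this.congr_deriv (by norm_num)
  have := (hp.mul hI).neg
  rw [key t ht]
  refine (this.congr_of_eventuallyEq ?_).congr_deriv ?_
  · filter_upwards [lt_mem_nhds ht] with s hs using key s hs
  · field_simp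
    ring

lemma nfG_deriv {φ u : ℝ → ℝ} (x0 : ℝ) (hφ : Continuous φ) (hu : Continuous u) (t : ℝ) :
    HasDerivAt (nfG φ x0 u) (nfV φ u t) t := by
  have hc := nfV_cont hφ hu
  exact (intervalIntegral.integral_hasDerivAt_right (hc.intervalIntegrable _ _)
      (hc.stronglyMeasurableAtFilter _ _) hc.continuousAt).const_add x0

lemma nfG_cont {φ u : ℝ → ℝ} (x0 : ℝ) (hφ : Continuous φ) (hu : Continuous u) :
    Continuous (nfG φ x0 u) :=
  continuous_iff_continuousAt.2 fun t => (nfG_deriv x0 hφ hu t).continuousAt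

lemma nfG_lip {φ u : ℝ → ℝ} (x0 : ℝ) (hφ : Continuous φ) (hb : ∀ y, |φ y| ≤ 2) (hu : Continuous u)
    (s t : ℝ) : |nfG φ x0 u t - nfG φ x0 u s| ≤ 2 * (|s| + |t|) * |t - s| := by
  have hc := nfV_cont hφ hu
  have : nfG φ x0 u t - nfG φ x0 u s = ∫ r in s..t, nfV φ u r := by
    unfold nfG
    rw [← intervalIntegral.integral_interval_sub_left (hc.intervalIntegrable 0 t)
      (hc.intervalIntegrable 0 s)]
    ring
  rw [this, ← Real.norm_eq_abs]
  apply intervalIntegral.norm_integral_le_of_norm_le_const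
  intro r hr
  refine (nfV_bound u hb r).trans ?_
  have : |r| ≤ |s| + |t| := by
    have h1 := abs_nonneg s
    have h2 := abs_nonneg t
    have h3 := le_abs_self s
    have h4 := le_abs_self t
    have h5 := neg_abs_le s
    have h6 := neg_abs_le t
    rw [Set.mem_uIoc] at hr
    rw [abs_le]
    rcases hr with hr | hr <;> constructor <;> linarith [hr.1, hr.2]
  linarith

lemma nfG_congr {φ u w : ℝ → ℝ} (x0 : ℝ) {t : ℝ} (ht : 0 ≤ t)
    (h : ∀ r, 0 ≤ r → r ≤ t → u r = w r) : nfG φ x0 u t = nfG φ x0 w t := by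
  unfold nfG
  congr 1
  apply intervalIntegral.integral_congr
  intro s hs
  rw [Set.uIcc_of_le ht] at hs
  simp only [nfV]
  congr 2
  apply intervalIntegral.integral_congr
  intro r hr
  rw [Set.uIcc_of_le zero_le_one] at hr
  simp only
  rw [h (s*r) (mul_nonneg hs.1 hr.1) (by nlinarith [hs.1, hs.2, hr.1, hr.2])]

lemma nfU_cont {φ : ℝ → ℝ} (x0 h : ℝ) (hφ : Continuous φ) (k : ℕ) : Continuous (nfU φ x0 h k) := by
  induction k with
  | zero => exact continuous_const
  | succ k ih => 
    have := nfG_cont x0 hφ ih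
    simp only [nfU]
    fun_prop

lemma nfU_lip {φ : ℝ → ℝ} (x0 : ℝ) {h : ℝ} (hh : 0 ≤ h) (hφ : Continuous φ) (hb : ∀ y, |φ y| ≤ 2) (k : ℕ)
    (s t : ℝ) : |nfU φ x0 h k t - nfU φ x0 h k s| ≤ 2 * (|s| + |t|) * |t - s| := by
  cases k with
  | zero => simp [nfU]; positivity
  | succ k =>
    simp only [nfU]
    refine (nfG_lip x0 hφ hb (nfU_cont x0 h hφ k) _ _).trans ?_
    have hm : ∀ r : ℝ, |max (r-h) 0| ≤ |r| := by
      intro r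
      rw [abs_of_nonneg (le_max_right _ _)]
      exact max_le (by linarith [le_abs_self r]) (abs_nonneg _)
    have h2 : |max (t-h) 0 - max (s-h) 0| ≤ |t-s| := by
      have := abs_max_sub_max_le_abs (t-h) (s-h) 0
      simpa using this
    exact mul_le_mul (by linarith [hm s, hm t]) h2 (abs_nonneg _) (by positivity)

lemma nfU_stab {φ : ℝ → ℝ} (x0 : ℝ) {h : ℝ} (hh : 0 ≤ h) (k : ℕ) :
    ∀ r, r ≤ k * h → nfU φ x0 h (k+1) r = nfU φ x0 h k r := by
  induction k with
  | zero =>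
    intro r hr
    have : max (r-h) 0 = 0 := max_eq_right (by simp at hr; linarith)
    simp [nfU, this, nfG]
  | succ k ih =>
    intro r hr
    rw [nfU]
    conv_rhs => rw [nfU]
    apply nfG_congr _ (le_max_right _ _)
    intro q hq0 hq
    apply ih
    refine hq.trans (max_le ?_ (by positivity))
    push_cast at hr
    linarith

lemma nf_exists_sol {φ : ℝ → ℝ} (x0 : ℝ) (hφ : Continuous φ) (hb : ∀ y, |φ y| ≤ 2) :
    ∃ x : ℝ → ℝ, Continuous x ∧ ∀ t, 0 ≤ t → x t = nfG φ x0 x t := by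
  set h : ℕ → ℝ := fun n => 1/((n:ℝ)+1) with hh
  have hpos : ∀ n, 0 ≤ h n := fun n => by simp only [hh]; positivity
  set w : ℕ → ℝ → ℝ := fun n => nfU φ x0 (h n) (n*(n+1)) with hw
  have wc : ∀ n, Continuous (w n) := fun n => nfU_cont _ _ hφ _
  have wl : ∀ n s t, |w n t - w n s| ≤ 2 * (|s| + |t|) * |t - s| := fun n => nfU_lip _ (hpos n) hφ hb _
  have w0 : ∀ n, w n 0 = x0 := by
    intro n
    simp only [hw]
    cases hk : n*(n+1) with
    | zero => rfl
    | succ k =>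
      simp [nfU, nfG, hpos n]
  have wf : ∀ (n : ℕ) (t : ℝ), t ≤ n → w n t = nfG φ x0 (w n) (max (t - h n) 0) := by
    intro n t ht
    have := nfU_stab (φ := φ) x0 (hpos n) (n*(n+1)) t (by
      simp only [hh]; push_cast; field_simp; exact ht)
    simp only [hw]
    rw [← this, nfU]
  -- subsequence converging on rationals
  have hcomp : IsCompact (Set.pi Set.univ (fun q : ℚ => Set.Icc (x0 - 2 * |(q:ℝ)| * |(q:ℝ)|) (x0 + 2 * |(q:ℝ)| * |(q:ℝ)|))) :=
    isCompact_univ_pi (fun q => isCompact_Icc)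
  obtain ⟨a, -, σ, hσ, hlim⟩ := hcomp.tendsto_subseq (x := fun n (q:ℚ) => w n q) (by
    intro n q _
    have := wl n 0 q
    rw [w0] at this
    simp only [abs_zero, zero_add, sub_zero] at this
    rw [abs_le] at this
    exact ⟨by linarith [this.1], by linarith [this.2]⟩)
  rw [tendsto_pi_nhds] at hlim
  have hcau : ∀ t, ∃ l, Tendsto (fun n => w (σ n) t) atTop (𝓝 l) := by
    intro t
    apply cauchySeq_tendsto_of_complete
    rw [Metric.cauchySeq_iff]
    intro ε hε
    set C := 2 * ((|t|+1) + |t|) with hC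
    have hCpos : 0 < C := by positivity
    obtain ⟨q, hq⟩ := exists_rat_near t (ε := min 1 (ε/(4*C))) (by positivity)
    have hq1 := hq.trans_le (min_le_left _ _)
    have hq2 := hq.trans_le (min_le_right _ _)
    have hb : ∀ n, |w n t - w n q| ≤ ε/4 := by
      intro n
      refine (wl n q t).trans ?_
      have : |(q:ℝ)| ≤ |t| + 1 := by
        have := abs_sub_abs_le_abs_sub (q:ℝ) t
        rw [abs_sub_comm] at this
        linarith
      calc 2 * (|(q:ℝ)| + |t|) * |t - q| ≤ C * (ε/(4*C)) := by
            rw [hC]; gcongr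
        _ = ε/4 := by field_simp
    obtain ⟨N, hN⟩ := Metric.cauchySeq_iff.1 (hlim q).cauchySeq (ε/4) (by positivity)
    refine ⟨N, fun m hm n hn => ?_⟩
    have h1 := hN m hm n hn
    simp only [Function.comp, Real.dist_eq] at h1 ⊢
    have h2 := hb (σ m)
    have h3 := hb (σ n)
    rw [abs_le] at h2 h3
    rw [abs_lt] at h1 ⊢
    constructor <;> linarith [h1.1, h1.2, h2.1, h2.2, h3.1, h3.2]
  choose x hx using hcau
  have xl : ∀ s t, |x t - x s| ≤ 2 * (|s| + |t|) * |t - s| := by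
    intro s t
    exact le_of_tendsto ((hx t).sub (hx s)).abs (Eventually.of_forall fun n => wl _ s t)
  have xc : Continuous x := by
    rw [continuous_iff_continuousAt]
    intro s
    rw [ContinuousAt, tendsto_iff_dist_tendsto_zero]
    have : Continuous (fun t => 2 * (|s| + |t|) * |t - s|) := by fun_prop
    have h0 := this.tendsto s
    simp only [sub_self, abs_zero, mul_zero] at h0
    exact squeeze_zero (fun _ => dist_nonneg) (fun t => xl s t) h0
  refine ⟨x, xc, fun t ht => ?_⟩
  have hV : ∀ s, Tendsto (fun n => nfV φ (w (σ n)) s) atTop (𝓝 (nfV φ x s)) := by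
    intro s
    unfold nfV
    refine (Tendsto.const_mul s ?_).neg
    apply intervalIntegral.tendsto_integral_filter_of_dominated_convergence (fun _ => (2:ℝ))
    · refine Eventually.of_forall fun n => ?_
      have := wc (σ n)
      exact (by fun_prop : Continuous (fun r => r^3 * φ (w (σ n) (s*r)))).aestronglyMeasurable
    · refine Eventually.of_forall fun n => Eventually.of_forall fun r hr => ?_
      rw [Set.uIoc_of_le zero_le_one] at hr
      rw [Real.norm_eq_abs, abs_mul, abs_of_nonneg (pow_nonneg hr.1.le 3)]
      have h1 : r^3 ≤ 1 := pow_le_one₀ hr.1.le hr.2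
      nlinarith [hb (w (σ n) (s*r)), abs_nonneg (φ (w (σ n) (s*r))), pow_nonneg hr.1.le 3]
    · simp
    · refine Eventually.of_forall fun r hr => ?_
      exact ((hφ.tendsto _).comp (hx (s*r))).const_mul _
  have hG : Tendsto (fun n => nfG φ x0 (w (σ n)) t) atTop (𝓝 (nfG φ x0 x t)) := by
    unfold nfG
    refine Tendsto.const_add x0 ?_
    apply intervalIntegral.tendsto_integral_filter_of_dominated_convergence (fun s => 2*|s|)
    · exact Eventually.of_forall fun n => (nfV_cont hφ (wc _)).aestronglyMeasurable
    · exact Eventually.of_forall fun n => Eventually.of_forall fun r hr => nfV_bound _ hb r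
    · exact (by fun_prop : Continuous (fun s : ℝ => 2*|s|)).intervalIntegrable _ _
    · exact Eventually.of_forall fun r hr => hV r
  have hσt : Tendsto σ atTop atTop := hσ.tendsto_atTop
  have hh0 : Tendsto (fun n => h (σ n)) atTop (𝓝 0) :=
    tendsto_one_div_add_atTop_nhds_zero_nat.comp hσt
  have hmax : Tendsto (fun n => max (t - h (σ n)) 0) atTop (𝓝 t) := by
    have := (tendsto_const_nhds (x := t)).sub hh0 |>.max (tendsto_const_nhds (x := (0:ℝ)))
    simpa [ht] using this
  have hdiff : Tendsto (fun n => nfG φ x0 (w (σ n)) (max (t - h (σ n)) 0) - nfG φ x0 (w (σ n)) t) atTop (𝓝 0) := by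
    rw [tendsto_zero_iff_abs_tendsto_zero]
    refine squeeze_zero (fun _ => abs_nonneg _) (fun n => nfG_lip x0 hφ hb (wc _) t _) ?_
    have h1 : Continuous (fun r => 2 * (|t| + |r|) * |r - t|) := by fun_prop
    have := (h1.tendsto t).comp hmax
    simp only [sub_self, abs_zero, mul_zero] at this
    exact this
  have h2 := hdiff.add hG
  simp only [sub_add_cancel, zero_add] at h2
  refine tendsto_nhds_unique (hx t) (h2.congr' ?_)
  filter_upwards [hσt.eventually_ge_atTop ⌈t⌉₊] with n hn
  refine (wf (σ n) t ?_).symm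
  exact (Nat.le_ceil t).trans (by exact_mod_cast hn)

lemma nf_exists {φ : ℝ → ℝ} (x0 : ℝ) (hφ : Continuous φ) (hb : ∀ y, |φ y| ≤ 2) :
    ∃ x v : ℝ → ℝ, Continuous x ∧ Continuous v ∧ x 0 = x0 ∧ v 0 = 0 ∧
      (∀ t, 0 < t → HasDerivAt x (v t) t) ∧
      (∀ t, 0 < t → HasDerivAt v (-(3/t) * v t - φ (x t)) t) := by
  obtain ⟨x, hx, hs⟩ := nf_exists_sol x0 hφ hb
  refine ⟨x, nfV φ x, hx, nfV_cont hφ hx, ?_, ?_, ?_, ?_⟩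
  · rw [hs 0 le_rfl]; simp [nfG]
  · simp [nfV]
  · intro t ht
    refine (nfG_deriv x0 hφ hx t).congr_of_eventuallyEq ?_
    filter_upwards [lt_mem_nhds ht] with s hs' using hs s hs'.le
  · intro t ht
    exact nfV_deriv hφ hx ht

/-- `L(s) = 1/√(1 - log s)` on `(0,1]`, `0` for `s ≤ 0`, `1` for `s ≥ 1`. -/
noncomputable def nfL (s : ℝ) : ℝ := if s ≤ 0 then 0 else (√(1 - Real.log (min s 1)))⁻¹

lemma nfL_of_nonpos {s : ℝ} (hs : s ≤ 0) : nfL s = 0 := if_pos hs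
lemma nfL_of_pos {s : ℝ} (hs : 0 < s) : nfL s = (√(1 - Real.log (min s 1)))⁻¹ := if_neg hs.not_ge
lemma nfL_of_mem {s : ℝ} (hs : 0 < s) (h1 : s ≤ 1) : nfL s = (√(1 - Real.log s))⁻¹ := by
  rw [nfL_of_pos hs, min_eq_left h1]

lemma nf_one_le {s : ℝ} (hs : 0 < s) : 1 ≤ 1 - Real.log (min s 1) := by
  have : Real.log (min s 1) ≤ 0 := Real.log_nonpos (le_min hs.le zero_le_one) (min_le_right _ _)
  linarith

lemma nfL_pos {s : ℝ} (hs : 0 < s) : 0 < nfL s := by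
  rw [nfL_of_pos hs]
  have := nf_one_le hs
  positivity

lemma nfL_nonneg (s : ℝ) : 0 ≤ nfL s := by
  rcases le_or_gt s 0 with h | h
  · rw [nfL_of_nonpos h]
  · exact (nfL_pos h).le

lemma nfL_le_one (s : ℝ) : nfL s ≤ 1 := by
  rcases le_or_gt s 0 with h | h
  · rw [nfL_of_nonpos h]; exact zero_le_one
  · rw [nfL_of_pos h]
    apply inv_le_one_of_one_le₀
    rw [Real.one_le_sqrt]
    exact nf_one_le h

lemma nfL_mono : Monotone nfL := by
  intro a b hab
  rcases le_or_gt a 0 with h | h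
  · rw [nfL_of_nonpos h]; exact nfL_nonneg b
  · have hb := h.trans_le hab
    rw [nfL_of_pos h, nfL_of_pos hb]
    have h1 := nf_one_le hb
    apply inv_anti₀ (by positivity)
    apply Real.sqrt_le_sqrt
    have := Real.log_le_log (lt_min h one_pos) (min_le_min_right 1 hab)
    linarith

lemma nfL_cont : Continuous nfL := by
  rw [continuous_iff_continuousAt]
  intro s
  rcases lt_trichotomy s 0 with h | h | h
  · refine (continuousAt_const (y := (0:ℝ))).congr ?_
    filter_upwards [gt_mem_nhds h] with r hr using (nfL_of_nonpos hr.le).symm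
  · subst h
    rw [continuousAt_iff_continuous_left'_right']
    constructor
    · rw [ContinuousWithinAt, nfL_of_nonpos le_rfl]
      refine (tendsto_const_nhds (x := (0:ℝ))).congr' ?_
      filter_upwards [self_mem_nhdsWithin] with r hr using (nfL_of_nonpos (le_of_lt hr)).symm
    · rw [ContinuousWithinAt, nfL_of_nonpos le_rfl]
      have h1 : Tendsto (fun r : ℝ => (√(1 - Real.log r))⁻¹) (𝓝[>] 0) (𝓝 0) := by
        apply tendsto_inv_atTop_zero.comp
        apply Real.tendsto_sqrt_atTop.comp
        exact tendsto_atTop_add_const_left _ 1 (tendsto_neg_atBot_atTop.comp Real.tendsto_log_nhdsGT_zero)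
      refine h1.congr' ?_
      filter_upwards [self_mem_nhdsWithin, mem_nhdsWithin_of_mem_nhds (gt_mem_nhds one_pos)] with r hr hr1
      exact (nfL_of_mem hr hr1.le).symm
  · have h1 : ContinuousAt (fun s => (√(1 - Real.log (min s 1)))⁻¹) s := by
      have h0 : min s 1 ≠ 0 := (lt_min h one_pos).ne'
      have h2 := nf_one_le h
      have h3 : √(1 - Real.log (min s 1)) ≠ 0 := by positivity
      refine ContinuousAt.inv₀ (f := fun s => √(1 - Real.log (min s 1))) ?_ h3
      apply Real.continuous_sqrt.continuousAt.comp
      apply continuousAt_const.sub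
      exact ContinuousAt.log (by fun_prop) h0
    refine h1.congr ?_
    filter_upwards [lt_mem_nhds h] with r hr using (nfL_of_pos hr).symm

noncomputable def nfP (s : ℝ) : ℝ := nfL s + nfL s ^ 3 / 2

lemma nfP_cont : Continuous nfP := by
  have := nfL_cont
  unfold nfP; fun_prop
lemma nfP_mono : Monotone nfP := by
  intro a b hab
  have := nfL_mono hab
  have h2 := pow_le_pow_left₀ (nfL_nonneg a) this 3
  unfold nfP; linarith
lemma nfP_of_nonpos {s : ℝ} (hs : s ≤ 0) : nfP s = 0 := by simp [nfP, nfL_of_nonpos hs]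
lemma nfP_pos {s : ℝ} (hs : 0 < s) : 0 < nfP s := by
  have := nfL_pos hs
  unfold nfP; positivity
lemma nfP_nonneg (s : ℝ) : 0 ≤ nfP s := by
  have := nfL_nonneg s
  unfold nfP; positivity
lemma nfP_le (s : ℝ) : nfP s ≤ 2 := by
  have := nfL_le_one s
  have h2 := pow_le_one₀ (n := 3) (nfL_nonneg s) this
  unfold nfP; linarith

/-- the odd force -/
noncomputable def nfphi (x : ℝ) : ℝ := nfP x - nfP (-x)

lemma nfphi_cont : Continuous nfphi := by
  have := nfP_cont
  unfold nfphi; fun_prop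
lemma nfphi_mono : Monotone nfphi := by
  intro a b hab
  have := nfP_mono hab
  have := nfP_mono (neg_le_neg hab)
  unfold nfphi; linarith
lemma nfphi_neg (x : ℝ) : nfphi (-x) = - nfphi x := by simp [nfphi]
lemma nfphi_of_nonneg {x : ℝ} (hx : 0 ≤ x) : nfphi x = nfP x := by
  simp [nfphi, nfP_of_nonpos (neg_nonpos.2 hx)]
lemma nfphi_abs_le (x : ℝ) : |nfphi x| ≤ 2 := by
  have := nfP_le x
  have := nfP_le (-x)
  have := nfP_nonneg x
  have := nfP_nonneg (-x)
  unfold nfphi; rw [abs_le]; constructor <;> linarith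

noncomputable def nfF (x : ℝ) : ℝ := ∫ s in (0:ℝ)..x, nfphi s

lemma nfF_deriv (x : ℝ) : HasDerivAt nfF (nfphi x) x :=
  intervalIntegral.integral_hasDerivAt_right (nfphi_cont.intervalIntegrable _ _)
      (nfphi_cont.stronglyMeasurableAtFilter _ _) nfphi_cont.continuousAt
lemma nfF_zero : nfF 0 = 0 := by simp [nfF]
lemma nfF_cont : Continuous nfF := continuous_iff_continuousAt.2 fun x => (nfF_deriv x).continuousAt
lemma nfF_contDiff : ContDiff ℝ 1 nfF := by
  rw [contDiff_one_iff_deriv]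
  refine ⟨fun x => (nfF_deriv x).differentiableAt, ?_⟩
  rw [funext fun x => (nfF_deriv x).deriv]
  exact nfphi_cont
lemma nfF_convex : ConvexOn ℝ Set.univ nfF := by
  apply Monotone.convexOn_univ_of_deriv (fun x => (nfF_deriv x).differentiableAt)
  rw [funext fun x => (nfF_deriv x).deriv]
  exact nfphi_mono
lemma nfF_neg (x : ℝ) : nfF (-x) = nfF x := by
  unfold nfF
  have := intervalIntegral.integral_comp_neg (a := 0) (b := x) nfphi
  simp only [nfphi_neg, intervalIntegral.integral_neg, neg_zero] at this
  rw [intervalIntegral.integral_symm, ← this, neg_neg]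
lemma nfF_abs (x : ℝ) : nfF |x| = nfF x := by
  rcases abs_choice x with h | h <;> rw [h]
  exact nfF_neg x
lemma nfF_strictMono : StrictMonoOn nfF (Set.Ici 0) := by
  apply strictMonoOn_of_deriv_pos (convex_Ici 0) nfF_cont.continuousOn
  intro x hx
  rw [interior_Ici] at hx
  rw [(nfF_deriv x).deriv, nfphi_of_nonneg (le_of_lt hx)]
  exact nfP_pos hx
lemma nfF_pos {x : ℝ} (hx : x ≠ 0) : 0 < nfF x := by
  rw [← nfF_abs, ← nfF_zero]
  exact nfF_strictMono (by simp) (by simp) (abs_pos.2 hx)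
lemma nfF_nonneg (x : ℝ) : 0 ≤ nfF x := by
  rcases eq_or_ne x 0 with h | h
  · rw [h, nfF_zero]
  · exact (nfF_pos h).le

lemma nfF_eq {x : ℝ} (h0 : 0 ≤ x) (h1 : x ≤ 1) : nfF x = x * nfL x := by
  have hder : ∀ y ∈ Set.Ioo (0:ℝ) x, HasDerivAt (fun s => s * nfL s) (nfphi y) y := by
    intro y hy
    have hy1 : y < 1 := hy.2.trans_le h1
    have hl : 1 ≤ 1 - Real.log y := by linarith [Real.log_nonpos hy.1.le hy1.le]
    have hs : 0 < √(1 - Real.log y) := by positivity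
    have hL : HasDerivAt nfL ((√(1 - Real.log y))⁻¹ ^ 3 / 2 * y⁻¹) y := by
      have := ((((Real.hasDerivAt_log hy.1.ne').const_sub 1).sqrt (by positivity)).inv hs.ne')
      refine (this.congr_of_eventuallyEq ?_).congr_deriv ?_
      · filter_upwards [lt_mem_nhds hy.1, gt_mem_nhds hy1] with r hr hr1
        exact nfL_of_mem hr hr1.le
      · have := hy.1.ne'
        field_simp
    refine ((hasDerivAt_id y).mul hL).congr_deriv ?_
    rw [nfphi_of_nonneg hy.1.le, nfP, nfL_of_mem hy.1 hy1.le]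
    have := hy.1.ne'
    simp only [id]
    field_simp
  have := intervalIntegral.integral_eq_sub_of_hasDerivAt_of_le h0
    (f := fun s => s * nfL s) (continuous_id.mul nfL_cont).continuousOn hder
    (nfphi_cont.intervalIntegrable _ _)
  simpa [nfF] using this

lemma nfF_ge_sq {x : ℝ} (h : |x| ≤ 1) : x^2 ≤ nfF x := by
  rw [← nfF_abs, ← sq_abs, nfF_eq (abs_nonneg x) h, sq]
  apply mul_le_mul_of_nonneg_left _ (abs_nonneg x)
  rcases (abs_nonneg x).eq_or_lt with h0 | h0
  · rw [← h0]; exact nfL_nonneg _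
  · rw [nfL_of_mem h0 h]
    set y := |x|
    have h2 : 1 - Real.log y ≤ y⁻¹ := by
      have := Real.log_le_sub_one_of_pos (inv_pos.2 h0)
      rw [Real.log_inv] at this
      linarith
    have h3 : 1 ≤ 1 - Real.log y := by linarith [Real.log_nonpos h0.le h]
    rw [le_inv_comm₀ h0 (by positivity)]
    have h4 : 1 ≤ y⁻¹ := (one_le_inv₀ h0).2 h
    rw [Real.sqrt_le_left (by positivity)]
    nlinarith

lemma nfF_defect {x : ℝ} (h0 : x ≠ 0) (h : |x| ≤ 1) :
    x * nfphi x - nfF x = nfF x / (2 * (1 - Real.log |x|)) := by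
  have hp : ∀ y, 0 < y → y ≤ 1 → y * nfphi y - nfF y = nfF y / (2 * (1 - Real.log y)) := by
    intro y hy hy1
    have hl : 1 ≤ 1 - Real.log y := by linarith [Real.log_nonpos hy.le hy1]
    rw [nfF_eq hy.le hy1, nfphi_of_nonneg hy.le, nfP]
    have : nfL y ^ 2 = (1 - Real.log y)⁻¹ := by
      rw [nfL_of_mem hy hy1, inv_pow, Real.sq_sqrt (by positivity)]
    have h3 : nfL y ^ 3 = nfL y * (1 - Real.log y)⁻¹ := by rw [← this]; ring
    rw [h3]; field_simp; ring
  have := hp |x| (abs_pos.2 h0) h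
  rw [nfF_abs] at this
  rw [← this]
  rcases abs_choice x with h | h <;> rw [h]
  rw [nfphi_neg]; ring

lemma nf_traj {x v : ℝ → ℝ} (hx : Continuous x) (hv : Continuous v) (x0 : x 0 = 1/2) (v0 : v 0 = 0)
    (dx : ∀ t, 0 < t → HasDerivAt x (v t) t)
    (dv : ∀ t, 0 < t → HasDerivAt v (-(3/t) * v t - nfphi (x t)) t) :
    ∃ b : ℝ, ∀ T, 1 ≤ T → (1/2) * Real.log (1 + Real.log T) + b ≤ 9 * ∫ t in (1:ℝ)..T, |v t| := by
  have hF := nfF_cont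
  have dF : ∀ t, 0 < t → HasDerivAt (fun t => nfF (x t)) (nfphi (x t) * v t) t :=
    fun t ht => (nfF_deriv (x t)).comp t (dx t ht)
  -- energy
  have hH : AntitoneOn (fun t => v t ^ 2 / 2 + nfF (x t)) (Set.Ici 0) := by
    apply antitoneOn_of_hasDerivWithinAt_nonpos (f' := fun t => -(3/t) * v t ^ 2) (convex_Ici 0)
    · exact Continuous.continuousOn (by fun_prop)
    · intro t ht
      rw [interior_Ici] at ht
      refine HasDerivAt.hasDerivWithinAt ?_
      refine ((((dv t ht).pow 2).div_const 2).add (dF t ht)).congr_deriv ?_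
      push_cast; ring
    · intro t ht
      rw [interior_Ici] at ht
      have : 0 < 3/t := div_pos three_pos ht
      nlinarith [mul_nonneg this.le (sq_nonneg (v t))]
  have hFhalf : nfF (1/2) ≤ 1/2 := by
    rw [nfF_eq (by norm_num) (by norm_num)]
    linarith [nfL_le_one (1/2)]
  have hFone : nfF 1 = 1 := by
    rw [nfF_eq (by norm_num) (by norm_num), nfL_of_mem one_pos le_rfl]; simp
  have hFx : ∀ t, 0 ≤ t → nfF (x t) ≤ 1/2 := by
    intro t ht
    have := hH Set.self_mem_Ici ht ht
    simp only [x0, v0] at this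
    nlinarith [sq_nonneg (v t)]
  have hx1 : ∀ t, 0 ≤ t → |x t| ≤ 1 := by
    intro t ht
    by_contra hc
    push Not at hc
    have h1 := nfF_strictMono (by simp) (by simp) hc
    rw [nfF_abs, hFone] at h1
    linarith [hFx t ht]
  have hdef : ∀ t, 0 ≤ t → 0 ≤ x t * nfphi (x t) - nfF (x t) ∧
      x t * nfphi (x t) - nfF (x t) ≤ nfF (x t) / 2 := by
    intro t ht
    rcases eq_or_ne (x t) 0 with h | h
    · simp [h, nfF_zero]
    · rw [nfF_defect h (hx1 t ht)]
      have hl : 1 ≤ 1 - Real.log |x t| := by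
        linarith [Real.log_nonpos (abs_nonneg _) (hx1 t ht)]
      have hp := nfF_nonneg (x t)
      refine ⟨by positivity, ?_⟩
      gcongr
      linarith
  -- Lyapunov function
  set E : ℝ → ℝ := fun t => t^2 * nfF (x t) + (2 * x t + t * v t)^2 / 2 with hE
  have cE : Continuous E := by fun_prop
  have dE : ∀ t, 0 < t → HasDerivAt E (-(2 * t) * (x t * nfphi (x t) - nfF (x t))) t := by
    intro t ht
    have h1 := ((hasDerivAt_pow 2 t).mul (dF t ht))
    have h2 := (((((dx t ht).const_mul 2).add ((hasDerivAt_id t).mul (dv t ht))).pow 2).div_const 2)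
    refine (h1.add h2).congr_deriv ?_
    simp only [id, Pi.add_apply, Pi.mul_apply]
    push_cast
    field_simp
    ring
  have E0 : E 0 = 1/2 := by simp only [hE, x0, v0]; norm_num
  have hEanti : AntitoneOn E (Set.Ici 0) := by
    apply antitoneOn_of_hasDerivWithinAt_nonpos (convex_Ici 0) cE.continuousOn
    · intro t ht
      rw [interior_Ici] at ht
      exact (dE t ht).hasDerivWithinAt
    · intro t ht
      rw [interior_Ici] at ht
      have ht' : (0:ℝ) < t := ht
      have := mul_nonneg ht'.le (hdef t ht'.le).1
      linarith
  have hEle : ∀ t, 0 ≤ t → E t ≤ 1/2 := by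
    intro t ht
    rw [← E0]
    exact hEanti Set.self_mem_Ici ht ht
  have hE1 : 1/4 ≤ E 1 := by
    have : MonotoneOn (fun t => E t + t^2/4) (Set.Ici 0) := by
      apply monotoneOn_of_hasDerivWithinAt_nonneg (convex_Ici 0)
        (f' := fun t => -(2 * t) * (x t * nfphi (x t) - nfF (x t)) + t/2)
      · exact Continuous.continuousOn (by fun_prop)
      · intro t ht
        rw [interior_Ici] at ht
        refine HasDerivAt.hasDerivWithinAt ?_
        refine ((dE t ht).add ((hasDerivAt_pow 2 t).div_const 4)).congr_deriv ?_
        push_cast; ring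
      · intro t ht
        rw [interior_Ici] at ht
        have ht' : (0:ℝ) < t := ht
        have h1 := (hdef t ht'.le).2
        have h2 := hFx t ht'.le
        have h3 : x t * nfphi (x t) - nfF (x t) ≤ 1/4 := by linarith
        nlinarith [mul_le_mul_of_nonneg_left h3 ht'.le]
    have := this (Set.self_mem_Ici) (show (1:ℝ) ∈ Set.Ici 0 by simp) zero_le_one
    simp only [E0] at this
    norm_num at this
    linarith
  have hFE : ∀ t, t^2 * nfF (x t) ≤ E t := fun t => by
    simp only [hE]; nlinarith [sq_nonneg (2 * x t + t * v t)]
  have hxt : ∀ t, 0 ≤ t → t^2 * (x t)^2 ≤ 1/2 := by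
    intro t ht
    have := mul_le_mul_of_nonneg_left (nfF_ge_sq (hx1 t ht)) (sq_nonneg t)
    linarith [hFE t, hEle t ht]
  have hxt' : ∀ t, 0 < t → |x t| ≤ t⁻¹ := by
    intro t ht
    have h1 : |t * x t| ≤ 1 := by
      rw [← sq_le_one_iff_abs_le_one, mul_pow]
      linarith [hxt t ht.le]
    rw [abs_mul, abs_of_pos ht] at h1
    rw [← one_div, le_div_iff₀ ht]
    linarith
  have hlog : ∀ t : ℝ, 1 ≤ t → 0 < 1 + Real.log t := fun t ht => by
    linarith [Real.log_nonneg ht]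
  have dlog : ∀ t : ℝ, 1 ≤ t → HasDerivAt (fun t => 1 + Real.log t) (t⁻¹) t := fun t ht =>
    (Real.hasDerivAt_log (by positivity)).const_add 1
  have clog : ContinuousOn (fun t : ℝ => 1 + Real.log t) (Set.Ici 1) := fun t ht =>
    (dlog t ht).continuousAt.continuousWithinAt
  have hElog : ∀ t, 1 ≤ t → 1/4 ≤ E t * (1 + Real.log t) := by
    have : MonotoneOn (fun t => E t * (1 + Real.log t)) (Set.Ici 1) := by
      apply monotoneOn_of_hasDerivWithinAt_nonneg (convex_Ici 1)
        (f' := fun t => -(2 * t) * (x t * nfphi (x t) - nfF (x t)) * (1 + Real.log t) + E t * t⁻¹)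
      · exact cE.continuousOn.mul clog
      · intro t ht
        rw [interior_Ici] at ht
        have ht' : (1:ℝ) < t := ht
        exact ((dE t (by linarith)).mul (dlog t ht'.le)).hasDerivWithinAt
      · intro t ht
        rw [interior_Ici] at ht
        have ht' : (1:ℝ) < t := ht
        have ht0 : 0 < t := by linarith
        have key : (x t * nfphi (x t) - nfF (x t)) * (1 + Real.log t) ≤ nfF (x t) / 2 := by
          rcases eq_or_ne (x t) 0 with h | h
          · simp [h, nfF_zero]
          · rw [nfF_defect h (hx1 t ht0.le)]
            have h1 := Real.log_le_log (abs_pos.2 h) (hxt' t ht0)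
            rw [Real.log_inv] at h1
            have h2 := hlog t ht'.le
            have h3 : 0 < 1 - Real.log |x t| := by linarith
            rw [div_mul_eq_mul_div, div_le_div_iff₀ (by positivity) two_pos]
            have := mul_le_mul_of_nonneg_left (show 1 + Real.log t ≤ 1 - Real.log |x t| by linarith)
              (nfF_nonneg (x t))
            linarith
        have h4 : t * nfF (x t) ≤ E t * t⁻¹ := by
          rw [← div_eq_mul_inv, le_div_iff₀ ht0]
          have := hFE t
          nlinarith
        have := mul_le_mul_of_nonneg_left key ht0.le
        nlinarith
    intro t ht
    have := this Set.self_mem_Ici ht ht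
    simp only [Real.log_one, add_zero, mul_one] at this
    linarith
  -- bound on velocity
  have htv : ∀ t, 0 ≤ t → |t * v t| ≤ 3 := by
    intro t ht
    have h1 : (2 * x t + t * v t)^2 ≤ 1 := by
      have := hEle t ht
      simp only [hE] at this
      have h2 := mul_nonneg (sq_nonneg t) (nfF_nonneg (x t))
      linarith
    have h2 := abs_le.1 ((sq_le_one_iff_abs_le_one _).1 h1)
    have h3 := abs_le.1 (hx1 t ht)
    rw [abs_le]
    constructor <;> linarith [h2.1, h2.2, h3.1, h3.2]
  have cav : Continuous (fun t => |v t|) := hv.abs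
  have dP : ∀ t, HasDerivAt (fun T => ∫ t in (1:ℝ)..T, |v t|) (|v t|) t := fun t =>
    intervalIntegral.integral_hasDerivAt_right (cav.intervalIntegrable _ _)
      (cav.stronglyMeasurableAtFilter _ _) cav.continuousAt
  set W : ℝ → ℝ := fun T => 9 * (∫ t in (1:ℝ)..T, |v t|) - 2 * (T * (x T * v T)) - 2 * (T^2)⁻¹
    - (1/2) * Real.log (1 + Real.log T) with hW
  have dW : ∀ t, 1 ≤ t → HasDerivAt W (9 * |v t| - 2 * (1 * (x t * v t) +
      t * (v t * v t + x t * (-(3/t) * v t - nfphi (x t)))) - 2 * (-(2*t)/(t^2)^2)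
      - (1/2) * (t⁻¹ / (1 + Real.log t))) t := by
    intro t ht
    have ht0 : 0 < t := by linarith
    have h1 := (dP t).const_mul 9
    have h2 := (((hasDerivAt_id t).mul ((dx t ht0).mul (dv t ht0))).const_mul 2)
    have h3 := (((hasDerivAt_pow 2 t).inv (by positivity)).const_mul 2)
    have h4 := ((dlog t ht).log (hlog t ht).ne').const_mul (1/2)
    refine (((h1.sub h2).sub h3).sub h4).congr_deriv ?_
    simp
  have hWm : MonotoneOn W (Set.Ici 1) := by
    apply monotoneOn_of_hasDerivWithinAt_nonneg (convex_Ici 1)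
      (fun t ht => (dW t ht).continuousAt.continuousWithinAt)
    · intro t ht
      exact (dW t (interior_subset ht)).hasDerivWithinAt
    · intro t ht
      have ht1 : 1 ≤ t := interior_subset ht
      have ht0 : 0 < t := by linarith
      have hl := hlog t ht1
      have h1 : (1/2) * (t⁻¹ / (1 + Real.log t)) ≤ 2 * E t / t := by
        have := hElog t ht1
        rw [le_div_iff₀ ht0]
        have : (1/2) * (t⁻¹ / (1 + Real.log t)) * t = (1/2) / (1 + Real.log t) := by
          field_simp
        rw [this, div_le_iff₀ hl]
        linarith
      have h2 : 2 * E t / t = 2 * t * nfF (x t) + 4 * (x t)^2 / t + 4 * (x t * v t) + t * (v t)^2 := by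
        simp only [hE]; field_simp; ring
      have h3 : 2 * t * nfF (x t) ≤ 2 * t * (x t * nfphi (x t)) := by
        have := (hdef t ht0.le).1
        nlinarith
      have h4 : 4 * (x t)^2 / t ≤ 4 / t^3 := by
        have := hxt t ht0.le
        rw [div_le_div_iff₀ ht0 (by positivity)]
        nlinarith
      have h5 : 3 * (t * (v t)^2) ≤ 9 * |v t| := by
        have := htv t ht0.le
        rw [abs_mul, abs_of_pos ht0] at this
        have h6 := mul_le_mul_of_nonneg_right this (abs_nonneg (v t))
        have h7 : (v t)^2 = |v t| * |v t| := by rw [← sq, sq_abs]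
        rw [h7]
        linarith
      have h6 : 9 * |v t| - 2 * (1 * (x t * v t) +
        t * (v t * v t + x t * (-(3/t) * v t - nfphi (x t)))) - 2 * (-(2*t)/(t^2)^2)
        = 9 * |v t| + 4 * (x t * v t) - 2 * (t * (v t)^2) + 2 * t * (x t * nfphi (x t)) + 4 / t^3 := by
        field_simp; ring
      rw [h6]
      linarith
  refine ⟨W 1 - 6, fun T hT => ?_⟩
  have h1 := hWm Set.self_mem_Ici hT hT
  have h2 : |T * (x T * v T)| ≤ 3 := by
    have := mul_le_mul (hx1 T (by linarith)) (htv T (by linarith)) (abs_nonneg _) zero_le_one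
    rw [← abs_mul] at this
    rw [show T * (x T * v T) = x T * (T * v T) by ring]
    linarith
  have h3 : 0 ≤ (T^2)⁻¹ := by positivity
  have h4 := (abs_le.1 h2).1
  have h5 : W T = 9 * (∫ t in (1:ℝ)..T, |v t|) - 2 * (T * (x T * v T)) - 2 * (T^2)⁻¹
    - (1/2) * Real.log (1 + Real.log T) := rfl
  rw [h5] at h1
  linarith

lemma nf_length {v : ℝ → ℝ} (hv : Continuous v) {b : ℝ}
    (hb : ∀ T, 1 ≤ T → (1/2) * Real.log (1 + Real.log T) + b ≤ 9 * ∫ t in (1:ℝ)..T, |v t|) :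
    (∫⁻ t in Set.Ioi (0:ℝ), ENNReal.ofReal |v t|) = ⊤ := by
  have hlim : Tendsto (fun T => ((1/2) * Real.log (1 + Real.log T) + b) / 9) atTop atTop := by
    apply Tendsto.atTop_div_const (by norm_num)
    apply tendsto_atTop_add_const_right
    apply Tendsto.const_mul_atTop (by norm_num)
    apply Real.tendsto_log_atTop.comp
    exact tendsto_atTop_add_const_left _ 1 Real.tendsto_log_atTop
  rw [← top_le_iff]
  refine le_of_tendsto (ENNReal.tendsto_ofReal_atTop.comp hlim) ?_
  filter_upwards [eventually_ge_atTop 1] with T hT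
  have cav : Continuous (fun t => |v t|) := hv.abs
  calc ENNReal.ofReal (((1/2) * Real.log (1 + Real.log T) + b) / 9)
      ≤ ENNReal.ofReal (∫ t in (1:ℝ)..T, |v t|) := by
        apply ENNReal.ofReal_le_ofReal
        linarith [hb T hT]
    _ = ∫⁻ t in Set.Ioc 1 T, ENNReal.ofReal |v t| := by
        rw [intervalIntegral.integral_of_le hT]
        apply ofReal_integral_eq_lintegral_ofReal
        · exact (cav.intervalIntegrable 1 T).1
        · exact Eventually.of_forall fun t => abs_nonneg _
    _ ≤ _ := by
        apply lintegral_mono_set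
        intro t ht
        exact lt_trans one_pos ht.1

lemma nf_grad (p : EuclideanSpace ℝ (Fin 2)) :
    HasGradientAt (fun p : EuclideanSpace ℝ (Fin 2) => nfF (p 0) + (p 1)^2)
      (EuclideanSpace.single 0 (nfphi (p 0)) + EuclideanSpace.single 1 (2 * p 1)) p := by
  rw [hasGradientAt_iff_hasFDerivAt]
  have h0 : HasFDerivAt (fun p : EuclideanSpace ℝ (Fin 2) => p 0) (EuclideanSpace.proj (0 : Fin 2) : _ →L[ℝ] ℝ) p :=
    (EuclideanSpace.proj (0 : Fin 2) : EuclideanSpace ℝ (Fin 2) →L[ℝ] ℝ).hasFDerivAt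
  have h1 : HasFDerivAt (fun p : EuclideanSpace ℝ (Fin 2) => p 1) (EuclideanSpace.proj (1 : Fin 2) : _ →L[ℝ] ℝ) p :=
    (EuclideanSpace.proj (1 : Fin 2) : EuclideanSpace ℝ (Fin 2) →L[ℝ] ℝ).hasFDerivAt
  have := ((nfF_deriv (p 0)).comp_hasFDerivAt p h0).add (h1.pow 2)
  refine this.congr_fderiv ?_
  ext q
  simp [inner_add_left, EuclideanSpace.inner_single_left]


/-- There exist a convex `C¹` function `f : ℝ² → ℝ` with unique minimizer at
the origin, a point `X₀ ≠ 0`, and a solution `X` of the critical Nesterov flow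
`Ẍ(t) + (3/t)·Ẋ(t) + ∇f(X(t)) = 0` with `X(0) = X₀`, `Ẋ(0⁺) = 0`, whose path length
`∫₀^∞ ‖Ẋ(t)‖ dt` is infinite. -/
theorem nesterov_flow_infinite_path_length :
    ∃ (f : EuclideanSpace ℝ (Fin 2) → ℝ) (X₀ : EuclideanSpace ℝ (Fin 2))
      (X X' X'' : ℝ → EuclideanSpace ℝ (Fin 2)),
      ConvexOn ℝ Set.univ f ∧
      ContDiff ℝ 1 f ∧
      (∀ x : EuclideanSpace ℝ (Fin 2), x ≠ 0 → f 0 < f x) ∧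
      X₀ ≠ 0 ∧
      ContinuousOn X (Set.Ici 0) ∧
      (∀ t > (0:ℝ), HasDerivAt X (X' t) t) ∧
      (∀ t > (0:ℝ), HasDerivAt X' (X'' t) t) ∧
      ContinuousOn X'' (Set.Ioi 0) ∧
      X 0 = X₀ ∧
      Filter.Tendsto X' (nhdsWithin 0 (Set.Ioi 0)) (nhds 0) ∧
      (∀ t > (0:ℝ), X'' t + (3 / t) • X' t + gradient f (X t) = 0) ∧
      (∫⁻ t in Set.Ioi (0:ℝ), (‖X' t‖₊ : ENNReal)) = ⊤ := by
  obtain ⟨x, v, hx, hv, x0, v0, dx, dv⟩ := nf_exists (1/2) nfphi_cont nfphi_abs_le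
  obtain ⟨b, hb⟩ := nf_traj hx hv x0 v0 dx dv
  set e : EuclideanSpace ℝ (Fin 2) := EuclideanSpace.single 0 1 with he
  have he1 : ‖e‖ = 1 := by simp [he]
  have he0 : e ≠ 0 := by rw [← norm_ne_zero_iff, he1]; exact one_ne_zero
  refine ⟨fun p => nfF (p 0) + (p 1)^2, (1/2 : ℝ) • e, fun t => x t • e, fun t => v t • e,
    fun t => (-(3/t) * v t - nfphi (x t)) • e, ?_, ?_, ?_, ?_, ?_, ?_, ?_, ?_, ?_, ?_, ?_, ?_⟩
  · apply ConvexOn.add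
    · exact nfF_convex.comp_linearMap (EuclideanSpace.proj (0 : Fin 2) : EuclideanSpace ℝ (Fin 2) →L[ℝ] ℝ).toLinearMap
    · exact (even_two.convexOn_pow (𝕜 := ℝ)).comp_linearMap (EuclideanSpace.proj (1 : Fin 2) : EuclideanSpace ℝ (Fin 2) →L[ℝ] ℝ).toLinearMap
  · have h0 : ContDiff ℝ 1 (fun p : EuclideanSpace ℝ (Fin 2) => p 0) :=
      (EuclideanSpace.proj (0 : Fin 2) : EuclideanSpace ℝ (Fin 2) →L[ℝ] ℝ).contDiff
    have h1 : ContDiff ℝ 1 (fun p : EuclideanSpace ℝ (Fin 2) => p 1) :=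
      (EuclideanSpace.proj (1 : Fin 2) : EuclideanSpace ℝ (Fin 2) →L[ℝ] ℝ).contDiff
    exact (nfF_contDiff.comp h0).add (h1.pow 2)
  · intro p hp
    have hz : nfF ((0 : EuclideanSpace ℝ (Fin 2)) 0) + ((0 : EuclideanSpace ℝ (Fin 2)) 1)^2 = 0 := by
      simp [nfF_zero]
    simp only [hz]
    by_cases h : p 0 = 0
    · have h1 : p 1 ≠ 0 := by
        intro h1
        apply hp
        ext i
        fin_cases i
        · exact h
        · exact h1
      have := nfF_nonneg (p 0)
      positivity
    · have := nfF_pos h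
      positivity
  · exact smul_ne_zero (by norm_num) he0
  · exact (hx.smul continuous_const).continuousOn
  · intro t ht
    exact (dx t ht).smul_const e
  · intro t ht
    exact (dv t ht).smul_const e
  · have h1 := nfphi_cont
    have h2 : ContinuousOn (fun t : ℝ => 3/t) (Set.Ioi 0) :=
      continuousOn_const.div continuousOn_id fun t ht => (ne_of_gt ht)
    have h3 : ContinuousOn (fun t => -(3/t) * v t - nfphi (x t)) (Set.Ioi 0) :=
      (h2.neg.mul hv.continuousOn).sub (h1.comp hx).continuousOn
    exact h3.smul continuousOn_const
  · simp only [x0]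
  · have h1 : Continuous (fun t => v t • e) := hv.smul continuous_const
    have h2 := h1.tendsto 0
    simp only [v0, zero_smul] at h2
    exact h2.mono_left nhdsWithin_le_nhds
  · intro t ht
    have h1 : gradient (fun p : EuclideanSpace ℝ (Fin 2) => nfF (p 0) + (p 1)^2) (x t • e) = nfphi (x t) • e := by
      rw [(nf_grad (x t • e)).gradient]
      ext i
      fin_cases i <;> simp [he]
    rw [h1, smul_smul, ← add_smul, ← add_smul]
    convert zero_smul ℝ e using 2
    ring
  · rw [← nf_length hv hb]
    congr 1
    ext t
    rw [← enorm_eq_nnnorm, ← ofReal_norm, norm_smul, he1, mul_one, Real.norm_eq_abs]
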